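/- Corollary 1 (near-optimality of the attack under convexity). Suppose θ_0 ∈ K and, for each t < T, z_t maximizes h(θ_t,·) over F and θ_{t+1} is the point of K closest (in norm) to θ_t − η_{t+1}·∇g_{z_t}(θ_t), where the step sizes are η_t := d/(G·√t). Then the produced poisoning sequence D* := (z_0,…,z_{T−1}) satisfies M* − M(D*) ≤ 3·G·d/√T. -/

import Mathlib

open scoped BigOperators

/-!
Greedy maximization makes `g (z t) (θ t)` an upper bound for every attack objective at `θ t`, so
the average of these numbers dominates the optimal attack value. Comparing that average with the
objective of the produced sequence at a fixed `u ∈ K` leaves exactly the average regret of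
projected subgradient descent against `u`. By the subgradient inequality, and since projecting
onto `K` brings a point closer to `u`, this regret is at most a telescoping sum weighted by the
inverse step sizes `G √t / d`, contributing `G d √T / 2`, plus `∑ G d / (2 √t) ≤ G d √T`.
-/

open Finset

lemma sum_range_mul_sub_succ_le {c a : ℕ → ℝ} (hc : Monotone c) (hc0 : 0 ≤ c 0) {B : ℝ} {T : ℕ}
    (ha : ∀ t ≤ T, a t ≤ B) :
    ∑ t ∈ range T, c (t + 1) * (a t - a (t + 1)) ≤ c T * (B - a T) := by
  induction T with
  | zero => simpa using mul_nonneg hc0 (sub_nonneg.2 (ha 0 le_rfl))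
  | succ T ih =>
    calc ∑ t ∈ range (T + 1), c (t + 1) * (a t - a (t + 1))
        ≤ c T * (B - a T) + c (T + 1) * (a T - a (T + 1)) := by
          rw [sum_range_succ]
          gcongr
          exact ih fun t ht => ha t (ht.trans T.le_succ)
      _ ≤ c (T + 1) * (B - a T) + c (T + 1) * (a T - a (T + 1)) := by
          exact add_le_add_left
            (mul_le_mul_of_nonneg_right (hc T.le_succ) (sub_nonneg.2 (ha T T.le_succ))) _
      _ = c (T + 1) * (B - a (T + 1)) := by ring

lemma inv_sqrt_succ_le (k : ℕ) : (√((k + 1 : ℕ) : ℝ))⁻¹ ≤ 2 * (√((k + 1 : ℕ) : ℝ) - √k) := by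
  have hpos : 0 < √((k + 1 : ℕ) : ℝ) := by positivity
  have hsq : √((k + 1 : ℕ) : ℝ) ^ 2 = √(k : ℝ) ^ 2 + 1 := by
    rw [Real.sq_sqrt (by positivity), Real.sq_sqrt (by positivity), Nat.cast_succ]
  rw [inv_le_iff_one_le_mul₀ hpos]
  nlinarith [sq_nonneg (√((k + 1 : ℕ) : ℝ) - √k)]

lemma sum_range_inv_sqrt_succ_le (T : ℕ) :
    ∑ t ∈ range T, (√((t + 1 : ℕ) : ℝ))⁻¹ ≤ 2 * √T := by
  calc ∑ t ∈ range T, (√((t + 1 : ℕ) : ℝ))⁻¹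
      ≤ ∑ t ∈ range T, 2 * (√((t + 1 : ℕ) : ℝ) - √t) :=
        sum_le_sum fun t _ => inv_sqrt_succ_le t
    _ = 2 * √T := by rw [← mul_sum, sum_range_sub (fun t : ℕ => √(t : ℝ))]; simp

section InnerProductSpace

variable {E : Type*} [NormedAddCommGroup E] [InnerProductSpace ℝ E] {K : Set E}

/-- `v` is a subgradient at `x` of the restriction of `f` to `K`; the point `x` is not required to
lie in `K`. -/
def IsSubgradientWithin (K : Set E) (f : E → ℝ) (x v : E) : Prop :=
  ∀ u ∈ K, f x + inner ℝ v (u - x) ≤ f u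

/-- `y` is a metric projection of `p` onto `K`. This is a relation because `K` need not be closed
and `E` need not be complete, so a projection may fail to exist. -/
def IsNearestPoint (K : Set E) (p y : E) : Prop :=
  y ∈ K ∧ ∀ w ∈ K, ‖y - p‖ ≤ ‖w - p‖

lemma isSubgradientWithin_gradient [CompleteSpace E] {f : E → ℝ} {x : E} (hf : ConvexOn ℝ K f)
    (hx : x ∈ K) (hfx : DifferentiableAt ℝ f x) :
    IsSubgradientWithin K f x (gradient f x) := by
  intro u hu
  let line : ℝ →ᵃ[ℝ] E := AffineMap.lineMap x u
  have line_zero : line 0 = x := AffineMap.lineMap_apply_zero x u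
  have line_one : line 1 = u := AffineMap.lineMap_apply_one x u
  have deriv_zero : HasDerivAt (f ∘ line) (inner ℝ (gradient f x) (u - x)) 0 := by
    have := hfx.hasGradientAt.hasFDerivAt.comp_hasDerivAt_of_eq 0
      (AffineMap.hasDerivAt_lineMap (a := x) (b := u)) line_zero.symm
    rwa [InnerProductSpace.toDual_apply_apply] at this
  have deriv_le_slope := (hf.comp_affineMap line).le_slope_of_hasDerivAt
    (by simpa [line_zero]) (by simpa [line_one]) one_pos deriv_zero
  rw [slope_def_field, Function.comp_apply, Function.comp_apply, line_zero, line_one]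
    at deriv_le_slope
  linarith

lemma IsSubgradientWithin.bddBelow_image {f : E → ℝ} {x v : E} (hv : IsSubgradientWithin K f x v)
    (hK : Bornology.IsBounded K) : BddBelow (f '' K) := by
  obtain ⟨C, hC⟩ := (Metric.isBounded_iff_subset_closedBall x).1 hK
  refine ⟨f x - ‖v‖ * C, Set.forall_mem_image.2 fun u hu => ?_⟩
  have dist_le : ‖u - x‖ ≤ C := mem_closedBall_iff_norm.1 (hC hu)
  have inner_ge : -(‖v‖ * ‖u - x‖) ≤ inner ℝ v (u - x) :=
    (abs_le.1 (abs_real_inner_le_norm v (u - x))).1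
  linarith [hv u hu, mul_le_mul_of_nonneg_left dist_le (norm_nonneg v)]

lemma IsNearestPoint.inner_sub_sub_nonpos {p y u : E} (hy : IsNearestPoint K p y)
    (hK : Convex ℝ K) (hu : u ∈ K) : inner ℝ (p - y) (u - y) ≤ 0 := by
  have : Nonempty K := ⟨⟨y, hy.1⟩⟩
  refine (norm_eq_iInf_iff_real_inner_le_zero hK hy.1).1 (le_antisymm ?_ ?_) u hu
  · exact le_ciInf fun w => by simpa only [norm_sub_rev p] using hy.2 w w.2
  · exact ciInf_le (f := fun w : K => ‖p - w‖)
      ⟨0, Set.forall_mem_range.2 fun _ => norm_nonneg _⟩ ⟨y, hy.1⟩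

lemma IsNearestPoint.norm_sub_sq_le {p y u : E} (hy : IsNearestPoint K p y)
    (hK : Convex ℝ K) (hu : u ∈ K) : ‖y - u‖ ^ 2 ≤ ‖p - u‖ ^ 2 := by
  have expand := norm_sub_sq_real (p - y) (u - y)
  rw [sub_sub_sub_cancel_right, norm_sub_rev u y] at expand
  linarith [hy.inner_sub_sub_nonpos hK hu, sq_nonneg ‖p - y‖]

lemma IsNearestPoint.two_mul_inner_le {x v y u : E} {c : ℝ} (hc : 0 < c)
    (hy : IsNearestPoint K (x - c⁻¹ • v) y) (hK : Convex ℝ K) (hu : u ∈ K) :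
    2 * inner ℝ v (x - u) ≤ c * (‖x - u‖ ^ 2 - ‖y - u‖ ^ 2) + c⁻¹ * ‖v‖ ^ 2 := by
  have expand : ‖x - c⁻¹ • v - u‖ ^ 2 =
      ‖x - u‖ ^ 2 - 2 * (c⁻¹ * inner ℝ v (x - u)) + c⁻¹ ^ 2 * ‖v‖ ^ 2 := by
    rw [sub_right_comm, norm_sub_sq_real, inner_smul_right, real_inner_comm, norm_smul, mul_pow,
      Real.norm_eq_abs, sq_abs]
  have scaled := mul_le_mul_of_nonneg_left (expand ▸ hy.norm_sub_sq_le hK hu) hc.le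
  have cancel : c * (‖x - u‖ ^ 2 - 2 * (c⁻¹ * inner ℝ v (x - u)) + c⁻¹ ^ 2 * ‖v‖ ^ 2) =
      c * ‖x - u‖ ^ 2 - 2 * inner ℝ v (x - u) + c⁻¹ * ‖v‖ ^ 2 := by
    field_simp
  linarith

/- Inverse step sizes `c` are used instead of step sizes because they allow `c 0 = 0`, as for
`c t = G √t / d`. -/
theorem sum_inner_le_of_isNearestPoint (hK : Convex ℝ K) {T : ℕ} {c : ℕ → ℝ} (hc : Monotone c)
    (hc0 : 0 ≤ c 0) (hc1 : 0 < c 1) {θ : ℕ → E} {v : Fin T → E}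
    (hstep : ∀ t : Fin T, IsNearestPoint K (θ t - (c (t + 1))⁻¹ • v t) (θ (t + 1)))
    {u : E} (hu : u ∈ K) {d : ℝ} (hd : ∀ t ≤ T, ‖θ t - u‖ ≤ d) :
    2 * ∑ t, inner ℝ (v t) (θ t - u) ≤ c T * d ^ 2 + ∑ t : Fin T, (c (t + 1))⁻¹ * ‖v t‖ ^ 2 := by
  have dist_sq_le (t : ℕ) (ht : t ≤ T) : ‖θ t - u‖ ^ 2 ≤ d ^ 2 :=
    pow_le_pow_left₀ (norm_nonneg _) (hd t ht) 2
  have telescope : ∑ t : Fin T, c (t + 1) * (‖θ t - u‖ ^ 2 - ‖θ (t + 1) - u‖ ^ 2) ≤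
      c T * d ^ 2 := by
    rw [Fin.sum_univ_eq_sum_range fun t => c (t + 1) * (‖θ t - u‖ ^ 2 - ‖θ (t + 1) - u‖ ^ 2)]
    refine (sum_range_mul_sub_succ_le hc hc0 dist_sq_le).trans ?_
    exact mul_le_mul_of_nonneg_left (sub_le_self _ (sq_nonneg _)) (hc0.trans (hc T.zero_le))
  calc 2 * ∑ t, inner ℝ (v t) (θ t - u)
      ≤ ∑ t : Fin T, (c (t + 1) * (‖θ t - u‖ ^ 2 - ‖θ (t + 1) - u‖ ^ 2) +
          (c (t + 1))⁻¹ * ‖v t‖ ^ 2) := by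
        rw [mul_sum]
        exact sum_le_sum fun t _ =>
          (hstep t).two_mul_inner_le (hc1.trans_le (hc (Nat.le_add_left 1 t))) hK hu
    _ ≤ c T * d ^ 2 + ∑ t : Fin T, (c (t + 1))⁻¹ * ‖v t‖ ^ 2 := by
        rw [sum_add_distrib]
        gcongr

theorem sum_inner_le_of_sqrt_steps (hK : Convex ℝ K) {T : ℕ} {d G : ℝ} (hd : 0 < d) (hG : 0 < G)
    {θ : ℕ → E} {v : Fin T → E}
    (hstep : ∀ t : Fin T,
      IsNearestPoint K (θ t - (d / (G * √((t + 1 : ℕ) : ℝ))) • v t) (θ (t + 1)))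
    {u : E} (hu : u ∈ K) (hdist : ∀ t ≤ T, ‖θ t - u‖ ≤ d) (hv : ∀ t, ‖v t‖ ≤ G) :
    ∑ t, inner ℝ (v t) (θ t - u) ≤ 3 / 2 * G * d * √T := by
  let c : ℕ → ℝ := fun t => G * √t / d
  have c_inv (t : ℕ) : (c t)⁻¹ = d / (G * √t) := inv_div _ _
  have c_mono : Monotone c := fun s t hst => by dsimp only [c]; gcongr
  have regret_le := sum_inner_le_of_isNearestPoint hK c_mono (by simp [c])
    (by simp only [c, Nat.cast_one, Real.sqrt_one]; positivity)
    (fun t => by rw [c_inv]; exact hstep t) hu hdist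
  have sum_steps_le : ∑ t : Fin T, (c (t + 1))⁻¹ * ‖v t‖ ^ 2 ≤ 2 * G * d * √T :=
    calc ∑ t : Fin T, (c (t + 1))⁻¹ * ‖v t‖ ^ 2
        ≤ ∑ t : Fin T, (c (t + 1))⁻¹ * G ^ 2 := by
          gcongr with t
          exact hv t
      _ = G * d * ∑ t ∈ range T, (√((t + 1 : ℕ) : ℝ))⁻¹ := by
          rw [Fin.sum_univ_eq_sum_range fun t => (c (t + 1))⁻¹ * G ^ 2, mul_sum]
          refine sum_congr rfl fun t _ => ?_
          rw [c_inv]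
          field_simp
      _ ≤ G * d * (2 * √T) := by
          gcongr
          exact sum_range_inv_sqrt_succ_le T
      _ = 2 * G * d * √T := by ring
  have last_weight : c T * d ^ 2 = G * d * √T := by
    dsimp only [c]
    field_simp
  linarith

end InnerProductSpace

section Attack

variable {X Z : Type*} {T : ℕ}

/-- The penalized attack objective `Φ_D` of a poisoning sequence `D`, for the family of penalized
losses `g`. The feasible points form the type `Z`. -/
noncomputable def attackObjective (g : Z → X → ℝ) (D : Fin T → Z) (θ : X) : ℝ :=
  1 / (T : ℝ) * ∑ t, g (D t) θ

/-- The value `M(D)` of a poisoning sequence: the least objective the learner can reach in `K`. It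
is the junk value `0` if the objective is unbounded below on `K`. -/
noncomputable def attackValue (g : Z → X → ℝ) (K : Set X) (D : Fin T → Z) : ℝ :=
  ⨅ θ : K, attackObjective g D θ

/-- The optimal attack value `M*` over poisoning sequences of length `T`. It is the junk value `0`
if the values are unbounded above. -/
noncomputable def optimalAttackValue (g : Z → X → ℝ) (K : Set X) (T : ℕ) : ℝ :=
  ⨆ D : Fin T → Z, attackValue g K D

variable {g : Z → X → ℝ} {K : Set X}

lemma attackValue_le_attackObjective (hg : ∀ z, BddBelow (g z '' K)) (D : Fin T → Z) {θ : X}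
    (hθ : θ ∈ K) : attackValue g K D ≤ attackObjective g D θ := by
  choose m hm using hg
  have lower_bound (θ : K) : 1 / (T : ℝ) * ∑ t, m (D t) ≤ attackObjective g D θ := by
    unfold attackObjective
    gcongr with t
    exact hm (D t) (Set.mem_image_of_mem _ θ.2)
  exact ciInf_le (f := fun θ : K => attackObjective g D θ)
    ⟨_, Set.forall_mem_range.2 lower_bound⟩ ⟨θ, hθ⟩

lemma attackObjective_le_of_forall_le (hT : 0 < T) (D : Fin T → Z) {θ : X} {a : ℝ}
    (ha : ∀ w, g w θ ≤ a) : attackObjective g D θ ≤ a := by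
  have hT' : (0 : ℝ) < T := Nat.cast_pos.2 hT
  rw [attackObjective, one_div, inv_mul_le_iff₀ hT']
  simpa using sum_le_sum fun t (_ : t ∈ univ) => ha (D t)

variable {θ : Fin T → X} {z : Fin T → Z}

lemma optimalAttackValue_le_average (hT : 0 < T) (hg : ∀ z, BddBelow (g z '' K))
    (hθ : ∀ t, θ t ∈ K) (hz : ∀ t w, g w (θ t) ≤ g (z t) (θ t)) :
    optimalAttackValue g K T ≤ 1 / (T : ℝ) * ∑ t, g (z t) (θ t) := by
  have : Nonempty (Fin T → Z) := ⟨z⟩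
  have hT' : (0 : ℝ) < T := Nat.cast_pos.2 hT
  refine ciSup_le fun D => ?_
  have value_le (t : Fin T) : attackValue g K D ≤ g (z t) (θ t) :=
    (attackValue_le_attackObjective hg D (hθ t)).trans
      (attackObjective_le_of_forall_le hT D (hz t))
  rw [one_div, le_inv_mul_iff₀ hT']
  simpa using sum_le_sum fun t (_ : t ∈ univ) => value_le t

theorem optimalAttackValue_sub_attackValue_le_of_regret (hT : 0 < T)
    (hg : ∀ z, BddBelow (g z '' K)) (hθ : ∀ t, θ t ∈ K)
    (hz : ∀ t w, g w (θ t) ≤ g (z t) (θ t)) {R : ℝ}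
    (hR : ∀ u ∈ K, ∑ t, (g (z t) (θ t) - g (z t) u) ≤ R) :
    optimalAttackValue g K T - attackValue g K z ≤ R / T := by
  have : Nonempty K := ⟨⟨θ ⟨0, hT⟩, hθ _⟩⟩
  rw [sub_le_comm]
  refine le_ciInf fun ⟨u, hu⟩ => ?_
  calc optimalAttackValue g K T - R / T
      ≤ 1 / (T : ℝ) * ∑ t, g (z t) (θ t) -
          1 / (T : ℝ) * ∑ t, (g (z t) (θ t) - g (z t) u) := by
        rw [← one_div_mul_eq_div (T : ℝ) R]
        gcongr
        · exact optimalAttackValue_le_average hT hg hθ hz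
        · exact hR u hu
    _ = attackObjective g z u := by
        rw [← mul_sub, sum_sub_distrib, sub_sub_cancel, attackObjective]

end Attack

theorem attack_near_optimal_of_convex_general
    {E : Type*} [NormedAddCommGroup E] [InnerProductSpace ℝ E] {Z : Type*}
    {K : Set E} (hK : Convex ℝ K)
    {d : ℝ} (hd : 0 < d) (hdiam : ∀ θ ∈ K, ∀ θ' ∈ K, ‖θ - θ'‖ ≤ d)
    {T : ℕ} (hT : 0 < T) {g : Z → E → ℝ} {v : Z → E → E}
    (hv : ∀ z, ∀ θ ∈ K, IsSubgradientWithin K (g z) θ (v z θ))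
    {G : ℝ} (hG : 0 < G) (hvG : ∀ z, ∀ θ ∈ K, ‖v z θ‖ ≤ G)
    {θs : ℕ → E} {zs : Fin T → Z} (hθ0 : θs 0 ∈ K)
    (hmax : ∀ (t : Fin T) (w : Z), g w (θs t) ≤ g (zs t) (θs t))
    (hstep : ∀ t : Fin T, IsNearestPoint K
      (θs t - (d / (G * √((t + 1 : ℕ) : ℝ))) • v (zs t) (θs t)) (θs (t + 1))) :
    optimalAttackValue g K T - attackValue g K zs ≤ 3 / 2 * G * d / √T := by
  have mem_K : ∀ t ≤ T, θs t ∈ K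
    | 0, _ => hθ0
    | t + 1, ht => (hstep ⟨t, ht⟩).1
  have iterate_mem (t : Fin T) : θs t ∈ K := mem_K t t.2.le
  have bounded_K : Bornology.IsBounded K :=
    Metric.isBounded_iff.2 ⟨d, fun x hx y hy => by simpa [dist_eq_norm] using hdiam x hx y hy⟩
  have regret_le (u : E) (hu : u ∈ K) :
      ∑ t, (g (zs t) (θs t) - g (zs t) u) ≤ 3 / 2 * G * d * √T := by
    refine le_trans (sum_le_sum fun t _ => ?_) (sum_inner_le_of_sqrt_steps hK hd hG hstep hu
      (fun t ht => hdiam _ (mem_K t ht) u hu) fun t => hvG _ _ (iterate_mem t))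
    have subgradient_le := hv (zs t) _ (iterate_mem t) u hu
    rw [← neg_sub, inner_neg_right] at subgradient_le
    linarith
  calc optimalAttackValue g K T - attackValue g K zs
      ≤ 3 / 2 * G * d * √T / T :=
        optimalAttackValue_sub_attackValue_le_of_regret hT
          (fun z => (hv z _ hθ0).bddBelow_image bounded_K) iterate_mem hmax regret_le
    _ = 3 / 2 * G * d / √T := by rw [mul_div_assoc, Real.sqrt_div_self', mul_one_div]

/-- Corollary 1 (near-optimality of the attack under convexity): projected online gradient
descent with step sizes `η t = d / (G √t)`, combined with per-step maximization of `h` over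
`F`, produces a poisoning sequence `zs` with `M* − M(zs) ≤ 3 G d / √T`. -/
theorem attack_near_optimal_of_convex
    {E : Type*} [NormedAddCommGroup E] [InnerProductSpace ℝ E] [CompleteSpace E]
    {P : Type*}
    -- the parameter space: a nonempty closed convex set of diameter at most d
    (K : Set E) (hKne : K.Nonempty) (hKclosed : IsClosed K) (hKconv : Convex ℝ K)
    (d : ℝ) (hd : 0 < d) (hdiam : ∀ θ ∈ K, ∀ θ' ∈ K, ‖θ - θ'‖ ≤ d)
    -- loss and per-point fairness gap, nonnegative on K
    (ℓ Δ : E → P → ℝ)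
    (hℓ : ∀ θ ∈ K, ∀ z, 0 ≤ ℓ θ z) (hΔ : ∀ θ ∈ K, ∀ z, 0 ≤ Δ θ z)
    (Dc : Multiset P) (hDc : Dc ≠ 0) (n : ℕ) (hn : Multiset.card Dc = n)
    (F : Finset P) (hF : F.Nonempty)
    (T : ℕ) (hT : 0 < T)
    (ε lam : ℝ) (hε : ε = (T : ℝ) / n) (hlam : 0 ≤ lam)
    (b : E → ℝ) (hb : ∀ θ, b θ = (1 / (n : ℝ)) * (Dc.map (ℓ θ)).sum)
    (h : E → P → ℝ) (hh : ∀ θ z, h θ z = ε * ℓ θ z + lam * Δ θ z)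
    (g : P → E → ℝ) (hg : ∀ z θ, g z θ = b θ + h θ z)
    -- each g z (extended to all of E) is convex and differentiable, with gradients bounded
    -- in norm by G on K
    (hconv : ∀ z : P, ConvexOn ℝ Set.univ (g z))
    (hdiff : ∀ z : P, Differentiable ℝ (g z))
    (G : ℝ) (hG : 0 < G)
    (hgrad : ∀ z : P, ∀ θ ∈ K, ‖gradient (g z) θ‖ ≤ G)
    -- step sizes
    (η : ℕ → ℝ) (hη : ∀ t : ℕ, η t = d / (G * Real.sqrt t))
    -- penalized attack objective, its value, and the optimal attack value
    (Φ : (Fin T → F) → E → ℝ)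
    (hΦ : ∀ D θ, Φ D θ = (1 / (T : ℝ)) * ∑ t, g (D t) θ)
    (M : (Fin T → F) → ℝ) (hM : ∀ D, M D = ⨅ θ : K, Φ D θ)
    (Mstar : ℝ) (hMstar : Mstar = ⨆ D : Fin T → F, M D)
    -- the iterates of the algorithm
    (θs : ℕ → E) (zs : Fin T → F)
    (hθ0 : θs 0 ∈ K)
    (hmax : ∀ t : Fin T, ∀ w ∈ F, h (θs t) w ≤ h (θs t) (zs t))
    (hstep : ∀ t : Fin T, θs ((t : ℕ) + 1) ∈ K ∧
      ∀ y ∈ K,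
        ‖θs ((t : ℕ) + 1) - (θs t - η ((t : ℕ) + 1) • gradient (g (zs t)) (θs t))‖ ≤
          ‖y - (θs t - η ((t : ℕ) + 1) • gradient (g (zs t)) (θs t))‖) :
    Mstar - M zs ≤ 3 * G * d / Real.sqrt T := by
  simp only [hη] at hstep
  have near_optimal : Mstar - M zs ≤ 3 / 2 * G * d / √T := by
    simp only [hMstar, hM, hΦ]
    exact attack_near_optimal_of_convex_general hKconv hd hdiam hT (g := fun z : F => g z)
      (fun z θ hθ => isSubgradientWithin_gradient
        ((hconv z).subset (Set.subset_univ K) hKconv) hθ (hdiff z θ))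
      hG (fun z => hgrad z) hθ0 (fun t w => by simpa [hg] using hmax t w w.2) hstep
  exact near_optimal.trans (by gcongr; norm_num)
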